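/- Reparameterization invariance of NEIS (Proposition 2.2). Let b be an admissible vector field with global flow X and Jacobian factor J^b, let α : ℝ^d → ℝ be continuously differentiable with inf_x α(x) > 0, suppose α·b is admissible with global flow Y and Jacobian factor J^{αb}, and let U0, U1 : ℝ^d → ℝ be continuous. Then: (i) b and α·b generate the same flowlines, i.e. for every x ∈ ℝ^d the orbits coincide as sets: { Y t x : t ∈ ℝ } = { X t x : t ∈ ℝ }; and (ii) for every x ∈ ℝ^d such that ∫_ℝ exp(−U0(X t x)) · J^b t x dt is finite and strictly positive and ∫_ℝ exp(−U1(X t x)) · J^b t x dt is finite, the infinite-time NEIS estimators agree: (∫_ℝ exp(−U1(Y t x)) · J^{αb} t x dt) / (∫_ℝ exp(−U0(Y t x)) · J^{αb} t x dt) = (∫_ℝ exp(−U1(X t x)) · J^b t x dt) / (∫_ℝ exp(−U0(X t x)) · J^b t x dt). -/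

import Mathlib

/-!
Fix a starting point `x`, write `η t = Y t x`, `γ t = X t x`, and let `θ t = ∫₀ᵗ α (η s) ds`. Both
`η` and `γ ∘ θ` solve the ODE `u' = α (η t) • b u` with the same initial value, so `η = γ ∘ θ` by
uniqueness. The primitive of `1 / (α ∘ γ)` undoes `θ` and is injective, so `θ` is a bijection of the
line, and the two orbits coincide.

By the product rule `div (α b) = α div b + Dα(b)`, and along `η` the second term is the derivative
of `log (α (η t))`. Integrating, `J^{αb} t x = J^b (θ t) x · θ' t / α x`. The substitution `s = θ t`
then turns every integral along `Y` into the corresponding one along `X` times `1 / α x`, and this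
factor cancels in the quotient.
-/

open MeasureTheory Filter

noncomputable section

/-- Euclidean state space ℝ^d. -/
abbrev Euc (d : ℕ) := EuclideanSpace ℝ (Fin d)

/-- Divergence of a vector field: trace of the Fréchet derivative. -/
def vdiv {d : ℕ} (b : Euc d → Euc d) (x : Euc d) : ℝ :=
  LinearMap.trace ℝ (Euc d) (fderiv ℝ b x).toLinearMap

/-- A vector field is admissible if it is C¹ with globally bounded derivative. -/
def Admissible {d : ℕ} (b : Euc d → Euc d) : Prop :=
  ContDiff ℝ 1 b ∧ ∃ C : ℝ, ∀ x, ‖fderiv ℝ b x‖ ≤ C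

/-- A global flow of the vector field `b`. -/
def IsGlobalFlow {d : ℕ} (b : Euc d → Euc d) (X : ℝ → Euc d → Euc d) : Prop :=
  (∀ x, X 0 x = x) ∧
  (∀ t s : ℝ, ∀ x, X (t + s) x = X t (X s x)) ∧
  (∀ x : Euc d, ∀ t : ℝ, HasDerivAt (fun τ => X τ x) (b (X t x)) t)

/-- Jacobian factor of the flow: J t x = exp(∫₀ᵗ div b(X s x) ds). -/
def Jac {d : ℕ} (b : Euc d → Euc d) (X : ℝ → Euc d → Euc d) (t : ℝ) (x : Euc d) : ℝ :=
  Real.exp (∫ s in (0:ℝ)..t, vdiv b (X s x))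

section Uniqueness

open scoped Topology

variable {E : Type*} [NormedAddCommGroup E] [NormedSpace ℝ E]

theorem isIntegralCurve_unique_of_locally_lipschitzOnWith {v : ℝ → E → E}
    (hv : ∀ t₀ x₀, ∃ K, ∃ s ∈ 𝓝 x₀, ∀ᶠ t in 𝓝 t₀, LipschitzOnWith K (v t) s)
    {γ η : ℝ → E} (hγ : IsIntegralCurve γ v) (hη : IsIntegralCurve η v) {t₀ : ℝ}
    (h₀ : γ t₀ = η t₀) : γ = η := by
  have isOpen_eq : IsOpen {t | γ t = η t} := by
    refine isOpen_iff_mem_nhds.2 fun t₁ (h₁ : γ t₁ = η t₁) => ?_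
    obtain ⟨K, s, hs, hK⟩ := hv t₁ (γ t₁)
    refine ODE_solution_unique_of_eventually (s := fun _ => s) hK ?_ ?_ h₁
    · filter_upwards [hγ.continuous.continuousAt.eventually_mem hs] with t ht using ⟨hγ t, ht⟩
    · filter_upwards [hη.continuous.continuousAt.eventually_mem (h₁ ▸ hs)] with t ht
        using ⟨hη t, ht⟩
  have isClopen_eq : IsClopen {t | γ t = η t} :=
    ⟨isClosed_eq hγ.continuous hη.continuous, isOpen_eq⟩
  exact funext (Set.eq_univ_iff_forall.1 (isClopen_eq.eq_univ ⟨t₀, h₀⟩))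

theorem isIntegralCurve_smul_unique {a : ℝ → ℝ} (ha : Continuous a) {b : E → E}
    (hb : LocallyLipschitz b) {γ η : ℝ → E} (hγ : IsIntegralCurve γ fun t x => a t • b x)
    (hη : IsIntegralCurve η fun t x => a t • b x) {t₀ : ℝ} (h₀ : γ t₀ = η t₀) : γ = η := by
  refine isIntegralCurve_unique_of_locally_lipschitzOnWith (fun t₁ x₁ => ?_) hγ hη h₀
  obtain ⟨K, s, hs, hK⟩ := hb x₁
  refine ⟨(‖a t₁‖₊ + 1) * K, s, hs, ?_⟩
  filter_upwards [ha.nnnorm.continuousAt.eventually_lt_const (lt_add_one ‖a t₁‖₊)] with t ht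
  refine LipschitzOnWith.of_dist_le_mul fun x hx y hy => ?_
  calc dist (a t • b x) (a t • b y) = ‖a t‖ * dist (b x) (b y) := dist_smul₀ _ _ _
    _ ≤ ‖a t‖ * (K * dist x y) := by gcongr; exact hK.dist_le_mul x hx y hy
    _ ≤ (‖a t₁‖ + 1) * (K * dist x y) := by gcongr; exact_mod_cast ht.le
    _ = ↑((‖a t₁‖₊ + 1) * K) * dist x y := by push_cast; ring

end Uniqueness

/-- The time change `t ↦ ∫₀ᵗ α (γ s) ds` with rate `α` along the curve `γ`. If `γ` is an integral
curve of `α • b`, it converts the time of `γ` into the time of the integral curve of `b` with the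
same starting point. -/
def clock {E : Type*} (α : E → ℝ) (γ : ℝ → E) (t : ℝ) : ℝ :=
  ∫ s in (0 : ℝ)..t, α (γ s)

section Clock

lemma clock_zero {E : Type*} (α : E → ℝ) (γ : ℝ → E) : clock α γ 0 = 0 :=
  intervalIntegral.integral_same

section TopologicalSpace

variable {E : Type*} [TopologicalSpace E] {α : E → ℝ} {γ η : ℝ → E}

lemma hasDerivAt_clock (hα : Continuous α) (hγ : Continuous γ) (t : ℝ) :
    HasDerivAt (clock α γ) (α (γ t)) t :=
  ((hα.comp hγ).integral_hasStrictDerivAt 0 t).hasDerivAt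

lemma strictMono_clock (hα : Continuous α) (hpos : ∀ x, 0 < α x) (hγ : Continuous γ) :
    StrictMono (clock α γ) :=
  strictMono_of_hasDerivAt_pos (hasDerivAt_clock hα hγ) fun _ => hpos _

lemma clock_inv_clock (hα : Continuous α) (hne : ∀ x, α x ≠ 0) (hγ : Continuous γ)
    (hη : Continuous η) (hηγ : η = γ ∘ clock α η) (t : ℝ) :
    clock α⁻¹ γ (clock α η t) = t := by
  have hderiv : ∀ s, HasDerivAt (fun s => clock α⁻¹ γ (clock α η s) - s) 0 s := fun s => by
    have h := (hasDerivAt_clock (hα.inv₀ hne) hγ (clock α η s)).comp s (hasDerivAt_clock hα hη s)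
    refine (h.sub (hasDerivAt_id s)).congr_deriv ?_
    rw [Pi.inv_apply, ← Function.comp_apply (f := γ), ← hηγ, inv_mul_cancel₀ (hne _), sub_self]
  have hconst := is_const_of_deriv_eq_zero (fun s => (hderiv s).differentiableAt)
    (fun s => (hderiv s).deriv) t 0
  simpa only [clock_zero, sub_zero, sub_eq_zero] using hconst

theorem bijective_clock (hα : Continuous α) (hpos : ∀ x, 0 < α x) (hγ : Continuous γ)
    (hη : Continuous η) (hηγ : η = γ ∘ clock α η) : Function.Bijective (clock α η) := by
  have hne : ∀ x, α x ≠ 0 := fun x => (hpos x).ne'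
  have hleft : Function.LeftInverse (clock α⁻¹ γ) (clock α η) := clock_inv_clock hα hne hγ hη hηγ
  have hinj : Function.Injective (clock α⁻¹ γ) :=
    (strictMono_clock (hα.inv₀ hne) (fun x => inv_pos.2 (hpos x)) hγ).injective
  exact ⟨hleft.injective, (hleft.rightInverse_of_injective hinj).surjective⟩

end TopologicalSpace

theorem eq_comp_clock_of_isIntegralCurve {E : Type*} [NormedAddCommGroup E] [NormedSpace ℝ E]
    {b : E → E} (hb : LocallyLipschitz b) {α : E → ℝ} (hα : Continuous α) {γ η : ℝ → E}
    (hγ : IsIntegralCurve γ fun _ => b) (hη : IsIntegralCurve η fun _ x => α x • b x)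
    (h₀ : η 0 = γ 0) : η = γ ∘ clock α η := by
  have hγθ : IsIntegralCurve (γ ∘ clock α η) fun t x => α (η t) • b x := fun t =>
    (hγ (clock α η t)).scomp t (hasDerivAt_clock hα hη.continuous t)
  refine isIntegralCurve_smul_unique (hα.comp hη.continuous) hb hη hγθ (t₀ := 0) ?_
  rw [Function.comp_apply, clock_zero, h₀]

end Clock

section ChangeOfVariables

variable {F : Type*} [NormedAddCommGroup F] [NormedSpace ℝ F] {θ θ' : ℝ → ℝ}

lemma integrable_deriv_smul_comp_iff (hθ : ∀ t, HasDerivAt θ (θ' t) t)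
    (hnonneg : ∀ t, 0 ≤ θ' t) (hbij : Function.Bijective θ) (g : ℝ → F) :
    Integrable (fun t => θ' t • g (θ t)) ↔ Integrable g := by
  have h := integrableOn_image_iff_integrableOn_abs_deriv_smul MeasurableSet.univ
    (fun t _ => (hθ t).hasDerivWithinAt) hbij.injective.injOn g
  simpa only [Set.image_univ, hbij.surjective.range_eq, integrableOn_univ,
    abs_of_nonneg (hnonneg _)] using h.symm

lemma integral_deriv_smul_comp_eq (hθ : ∀ t, HasDerivAt θ (θ' t) t) (hnonneg : ∀ t, 0 ≤ θ' t)
    (hbij : Function.Bijective θ) (g : ℝ → F) : ∫ t, θ' t • g (θ t) = ∫ s, g s := by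
  have h := integral_image_eq_integral_abs_deriv_smul MeasurableSet.univ
    (fun t _ => (hθ t).hasDerivWithinAt) hbij.injective.injOn g
  simpa only [Set.image_univ, hbij.surjective.range_eq, setIntegral_univ,
    abs_of_nonneg (hnonneg _)] using h.symm

end ChangeOfVariables

section Divergence

lemma integral_fderiv_along_eq_log_sub_log {E : Type*} [NormedAddCommGroup E] [NormedSpace ℝ E]
    {α : E → ℝ} (hα : ContDiff ℝ 1 α) (hne : ∀ x, α x ≠ 0) {b : E → E} (hb : Continuous b)
    {η : ℝ → E} (hη : IsIntegralCurve η fun _ x => α x • b x) (t : ℝ) :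
    ∫ s in (0 : ℝ)..t, fderiv ℝ α (η s) (b (η s)) =
      Real.log (α (η t)) - Real.log (α (η 0)) := by
  have hlog : ∀ s, HasDerivAt (fun s => Real.log (α (η s))) (fderiv ℝ α (η s) (b (η s))) s :=
    fun s => by
      have hαη := (hα.differentiable one_ne_zero (η s)).hasFDerivAt.comp_hasDerivAt s (hη s)
      refine (hαη.log (hne _)).congr_deriv ?_
      rw [map_smul, smul_eq_mul, Function.comp_apply, mul_div_cancel_left₀ _ (hne _)]
  have hcont : Continuous fun s => fderiv ℝ α (η s) (b (η s)) :=
    ((hα.continuous_fderiv one_ne_zero).clm_apply hb).comp hη.continuous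
  exact intervalIntegral.integral_eq_sub_of_hasDerivAt (fun s _ => hlog s)
    (hcont.intervalIntegrable 0 t)

variable {d : ℕ} {b : Euc d → Euc d} {α : Euc d → ℝ}

lemma continuous_vdiv (hb : ContDiff ℝ 1 b) : Continuous (vdiv b) := by
  have h : Continuous fun L : Euc d →L[ℝ] Euc d => LinearMap.trace ℝ (Euc d) L.toLinearMap :=
    LinearMap.continuous_of_finiteDimensional
      ((LinearMap.trace ℝ (Euc d)).comp (ContinuousLinearMap.coeLM ℝ))
  exact h.comp (hb.continuous_fderiv one_ne_zero)

lemma vdiv_smul {x : Euc d} (hα : DifferentiableAt ℝ α x) (hb : DifferentiableAt ℝ b x) :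
    vdiv (fun y => α y • b y) x = α x * vdiv b x + fderiv ℝ α x (b x) := by
  have h : ((fderiv ℝ α x).smulRight (b x)).toLinearMap
      = (fderiv ℝ α x).toLinearMap.smulRight (b x) := rfl
  rw [vdiv, fderiv_fun_smul hα hb, ContinuousLinearMap.toLinearMap_add, map_add,
    ContinuousLinearMap.toLinearMap_smul, map_smul, h, LinearMap.trace_smulRight,
    smul_eq_mul, ContinuousLinearMap.coe_coe, vdiv]

theorem integral_vdiv_smul_along (hb : ContDiff ℝ 1 b) (hα : ContDiff ℝ 1 α)
    (hne : ∀ x, α x ≠ 0) {γ η : ℝ → Euc d} (hγ : Continuous γ)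
    (hη : IsIntegralCurve η fun _ x => α x • b x) (hηγ : η = γ ∘ clock α η) (t : ℝ) :
    ∫ s in (0 : ℝ)..t, vdiv (fun y => α y • b y) (η s) =
      (∫ s in (0 : ℝ)..clock α η t, vdiv b (γ s)) +
        (Real.log (α (η t)) - Real.log (α (η 0))) := by
  have hαη : Continuous fun s => α (η s) := hα.continuous.comp hη.continuous
  have hdivη : Continuous fun s => vdiv b (η s) := (continuous_vdiv hb).comp hη.continuous
  have hfderiv : Continuous fun s => fderiv ℝ α (η s) (b (η s)) :=
    ((hα.continuous_fderiv one_ne_zero).clm_apply hb.continuous).comp hη.continuous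
  have hsubst : ∫ s in (0 : ℝ)..t, vdiv b (η s) * α (η s) =
      ∫ s in (0 : ℝ)..clock α η t, vdiv b (γ s) := by
    have h := intervalIntegral.integral_comp_mul_deriv (a := 0) (b := t)
      (fun s _ => hasDerivAt_clock hα.continuous hη.continuous s) hαη.continuousOn
      ((continuous_vdiv hb).comp hγ)
    rwa [clock_zero, Function.comp_assoc, ← hηγ] at h
  calc ∫ s in (0 : ℝ)..t, vdiv (fun y => α y • b y) (η s)
      = ∫ s in (0 : ℝ)..t, (vdiv b (η s) * α (η s) + fderiv ℝ α (η s) (b (η s))) := by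
        simp only [vdiv_smul (hα.differentiable one_ne_zero _) (hb.differentiable one_ne_zero _),
          mul_comm]
    _ = (∫ s in (0 : ℝ)..t, vdiv b (η s) * α (η s)) +
          ∫ s in (0 : ℝ)..t, fderiv ℝ α (η s) (b (η s)) :=
        intervalIntegral.integral_add ((hdivη.mul hαη).intervalIntegrable 0 t)
          (hfderiv.intervalIntegrable 0 t)
    _ = _ := by rw [hsubst, integral_fderiv_along_eq_log_sub_log hα hne hb.continuous hη]

end Divergence

namespace IsGlobalFlow

variable {d : ℕ} {b : Euc d → Euc d} {X Y : ℝ → Euc d → Euc d} {α : Euc d → ℝ}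

lemma isIntegralCurve (hX : IsGlobalFlow b X) (x : Euc d) :
    IsIntegralCurve (fun t => X t x) fun _ => b :=
  hX.2.2 x

lemma continuous (hX : IsGlobalFlow b X) (x : Euc d) : Continuous fun t => X t x :=
  (hX.isIntegralCurve x).continuous

theorem smul_eq_comp_clock (hX : IsGlobalFlow b X) (hY : IsGlobalFlow (fun y => α y • b y) Y)
    (hb : LocallyLipschitz b) (hα : Continuous α) (x : Euc d) :
    (fun t => Y t x) = (fun t => X t x) ∘ clock α fun t => Y t x :=
  eq_comp_clock_of_isIntegralCurve hb hα (hX.isIntegralCurve x) (hY.isIntegralCurve x)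
    ((hY.1 x).trans (hX.1 x).symm)

theorem bijective_clock_smul (hX : IsGlobalFlow b X) (hY : IsGlobalFlow (fun y => α y • b y) Y)
    (hb : LocallyLipschitz b) (hα : Continuous α) (hpos : ∀ x, 0 < α x) (x : Euc d) :
    Function.Bijective (clock α fun t => Y t x) :=
  bijective_clock hα hpos (hX.continuous x) (hY.continuous x) (hX.smul_eq_comp_clock hY hb hα x)

theorem range_smul_eq (hX : IsGlobalFlow b X) (hY : IsGlobalFlow (fun y => α y • b y) Y)
    (hb : LocallyLipschitz b) (hα : Continuous α) (hpos : ∀ x, 0 < α x) (x : Euc d) :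
    Set.range (fun t => Y t x) = Set.range fun t => X t x := by
  rw [hX.smul_eq_comp_clock hY hb hα x]
  exact (hX.bijective_clock_smul hY hb hα hpos x).surjective.range_comp _

theorem jac_smul_eq (hX : IsGlobalFlow b X) (hY : IsGlobalFlow (fun y => α y • b y) Y)
    (hb : ContDiff ℝ 1 b) (hα : ContDiff ℝ 1 α) (hpos : ∀ x, 0 < α x) (t : ℝ) (x : Euc d) :
    Jac (fun y => α y • b y) Y t x =
      Jac b X (clock α (fun s => Y s x) t) x * (α (Y t x) / α x) := by
  have hηγ := hX.smul_eq_comp_clock hY hb.locallyLipschitz hα.continuous x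
  have hdiv := integral_vdiv_smul_along hb hα (fun y => (hpos y).ne') (hX.continuous x)
    (hY.isIntegralCurve x) hηγ t
  rw [Jac, Jac, hdiv, hY.1, Real.exp_add, Real.exp_sub, Real.exp_log (hpos _),
    Real.exp_log (hpos _)]

lemma mul_jac_smul_eq (hX : IsGlobalFlow b X) (hY : IsGlobalFlow (fun y => α y • b y) Y)
    (hb : ContDiff ℝ 1 b) (hα : ContDiff ℝ 1 α) (hpos : ∀ x, 0 < α x) (f : Euc d → ℝ)
    (t : ℝ) (x : Euc d) :
    f (Y t x) * Jac (fun y => α y • b y) Y t x =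
      (α x)⁻¹ * (α (Y t x) • (f (X (clock α (fun s => Y s x) t) x) *
        Jac b X (clock α (fun s => Y s x) t) x)) := by
  have hYX : Y t x = X (clock α (fun s => Y s x) t) x :=
    congrFun (hX.smul_eq_comp_clock hY hb.locallyLipschitz hα.continuous x) t
  rw [hX.jac_smul_eq hY hb hα hpos, ← hYX, smul_eq_mul]
  ring

theorem integrable_mul_jac_smul_iff (hX : IsGlobalFlow b X)
    (hY : IsGlobalFlow (fun y => α y • b y) Y) (hb : ContDiff ℝ 1 b) (hα : ContDiff ℝ 1 α)
    (hpos : ∀ x, 0 < α x) (f : Euc d → ℝ) (x : Euc d) :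
    Integrable (fun t => f (Y t x) * Jac (fun y => α y • b y) Y t x) ↔
      Integrable fun t => f (X t x) * Jac b X t x := by
  simp only [hX.mul_jac_smul_eq hY hb hα hpos]
  rw [integrable_const_mul_iff (inv_ne_zero (hpos x).ne').isUnit]
  exact integrable_deriv_smul_comp_iff (hasDerivAt_clock hα.continuous (hY.continuous x))
    (fun _ => (hpos _).le) (hX.bijective_clock_smul hY hb.locallyLipschitz hα.continuous hpos x)
    fun s => f (X s x) * Jac b X s x

theorem integral_mul_jac_smul_eq (hX : IsGlobalFlow b X)
    (hY : IsGlobalFlow (fun y => α y • b y) Y) (hb : ContDiff ℝ 1 b) (hα : ContDiff ℝ 1 α)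
    (hpos : ∀ x, 0 < α x) (f : Euc d → ℝ) (x : Euc d) :
    ∫ t, f (Y t x) * Jac (fun y => α y • b y) Y t x =
      (α x)⁻¹ * ∫ t, f (X t x) * Jac b X t x := by
  simp only [hX.mul_jac_smul_eq hY hb hα hpos]
  rw [integral_const_mul]
  congr 1
  exact integral_deriv_smul_comp_eq (hasDerivAt_clock hα.continuous (hY.continuous x))
    (fun _ => (hpos _).le) (hX.bijective_clock_smul hY hb.locallyLipschitz hα.continuous hpos x)
    fun s => f (X s x) * Jac b X s x

end IsGlobalFlow

/-- The two `≠ 0` conditions include integrability: the Bochner integral of a nonintegrable function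
is `0`. -/
theorem stmt_5_general {d : ℕ} {b : Euc d → Euc d} (hb : ContDiff ℝ 1 b)
    {X : ℝ → Euc d → Euc d} (hX : IsGlobalFlow b X)
    {α : Euc d → ℝ} (hα : ContDiff ℝ 1 α) (hpos : ∀ x, 0 < α x)
    {Y : ℝ → Euc d → Euc d} (hY : IsGlobalFlow (fun y => α y • b y) Y) (f₀ f₁ : Euc d → ℝ) :
    (∀ x, Set.range (fun t => Y t x) = Set.range fun t => X t x) ∧
    ∀ x,
      ∫ t, f₀ (X t x) * Jac b X t x ≠ 0 →
      Integrable (fun t => f₁ (X t x) * Jac b X t x) →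
      ∫ t, f₀ (Y t x) * Jac (fun y => α y • b y) Y t x ≠ 0 ∧
      Integrable (fun t => f₁ (Y t x) * Jac (fun y => α y • b y) Y t x) ∧
      (∫ t, f₁ (Y t x) * Jac (fun y => α y • b y) Y t x) /
          (∫ t, f₀ (Y t x) * Jac (fun y => α y • b y) Y t x) =
        (∫ t, f₁ (X t x) * Jac b X t x) / (∫ t, f₀ (X t x) * Jac b X t x) := by
  refine ⟨hX.range_smul_eq hY hb.locallyLipschitz hα.continuous hpos, fun x hne hint₁ => ?_⟩
  have integral_eq := fun f => hX.integral_mul_jac_smul_eq hY hb hα hpos f x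
  have hinv : (α x)⁻¹ ≠ 0 := inv_ne_zero (hpos x).ne'
  refine ⟨?_, (hX.integrable_mul_jac_smul_iff hY hb hα hpos f₁ x).2 hint₁, ?_⟩
  · rw [integral_eq]
    exact mul_ne_zero hinv hne
  · rw [integral_eq, integral_eq]
    exact mul_div_mul_left _ _ hinv

/-- Reparameterization invariance of NEIS (Proposition 2.2). -/
theorem stmt_5 {d : ℕ} (hd : 0 < d)
    (b : Euc d → Euc d) (hb : Admissible b)
    (X : ℝ → Euc d → Euc d) (hX : IsGlobalFlow b X)
    (α : Euc d → ℝ) (hα : ContDiff ℝ 1 α)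
    (hαpos : ∃ c : ℝ, 0 < c ∧ ∀ x, c ≤ α x)
    (hab : Admissible (fun y => α y • b y))
    (Y : ℝ → Euc d → Euc d) (hY : IsGlobalFlow (fun y => α y • b y) Y)
    (U0 U1 : Euc d → ℝ) (hU0c : Continuous U0) (hU1c : Continuous U1) :
    (∀ x : Euc d, Set.range (fun t : ℝ => Y t x) = Set.range (fun t : ℝ => X t x)) ∧
    ∀ x : Euc d,
      Integrable (fun t : ℝ => Real.exp (-(U0 (X t x))) * Jac b X t x) →
      0 < (∫ t : ℝ, Real.exp (-(U0 (X t x))) * Jac b X t x) →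
      Integrable (fun t : ℝ => Real.exp (-(U1 (X t x))) * Jac b X t x) →
      (∫ t : ℝ, Real.exp (-(U1 (Y t x))) * Jac (fun y => α y • b y) Y t x) /
          (∫ t : ℝ, Real.exp (-(U0 (Y t x))) * Jac (fun y => α y • b y) Y t x) =
        (∫ t : ℝ, Real.exp (-(U1 (X t x))) * Jac b X t x) /
          (∫ t : ℝ, Real.exp (-(U0 (X t x))) * Jac b X t x) := by
  obtain ⟨c, hc, hcα⟩ := hαpos
  have h := stmt_5_general hb.1 hX hα (fun x => hc.trans_le (hcα x)) hY
    (fun y => Real.exp (-(U0 y))) fun y => Real.exp (-(U1 y))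
  exact ⟨h.1, fun x _ hpos hint₁ => (h.2 x hpos.ne' hint₁).2.2⟩
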